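/- Suppose the distributional preference ≿ satisfies the upper-bound property and the maximizer property. Then for every S ⊆ 𝒮, the frontier F(S) is nonempty and satisfies the matroid basis-exchange axiom: for all B, B' ∈ F(S) and every b ∈ B \ B', there exists b' ∈ B' \ B such that (B \ {b}) ∪ {b'} ∈ F(S). Hence F(S) forms the collection of bases of a matroid with ground set S. -/

import Mathlib

open Finset

variable {α : Type*}

/-- Strict part of a distributional preference. -/
def strictPref (pref : Finset α → Finset α → Prop) (A B : Finset α) : Prop :=
  pref A B ∧ ¬ pref B A

/-- Indifference part of a distributional preference. -/
def indiffPref (pref : Finset α → Finset α → Prop) (A B : Finset α) : Prop :=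
  pref A B ∧ pref B A

/-- Incomparability under a distributional preference. -/
def incomparable (pref : Finset α → Finset α → Prop) (A B : Finset α) : Prop :=
  ¬ pref A B ∧ ¬ pref B A

/-- `NW q S` is the collection of non-wasteful subsets of `S`. -/
def NW (q : ℕ) (S : Finset α) : Set (Finset α) :=
  {T | T ⊆ S ∧ T.card = min q S.card}

/-- The frontier of `S`: non-wasteful subsets undominated w.r.t. the preference. -/
def frontierSet (pref : Finset α → Finset α → Prop) (q : ℕ) (S : Finset α) :
    Set (Finset α) :=
  {T | T ∈ NW q S ∧ ∀ T' ∈ NW q S, ¬ strictPref pref T' T}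

/-- The upper-bound property of a distributional preference. -/
def upperBoundProperty [DecidableEq α] (pref : Finset α → Finset α → Prop) (q : ℕ) : Prop :=
  ∀ S S' : Finset α, S.card = q → S'.card = q → incomparable pref S S' →
    ∃ S'' ∈ NW q (S ∪ S'), strictPref pref S'' S ∨ strictPref pref S'' S'

/-- The maximizer property of a distributional preference. -/
def maximizerProperty [DecidableEq α] (pref : Finset α → Finset α → Prop) (q : ℕ) : Prop :=
  ∀ S S' : Finset α, S ≠ S' → S.card = q → S'.card = q →
    (∀ S'' ∈ NW q (S ∪ S'), pref S S'' ∧ pref S' S'') →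
    ∃ s ∈ S \ S', ∃ s' ∈ S' \ S,
      indiffPref pref (S.erase s ∪ {s'}) S ∧ indiffPref pref (S'.erase s' ∪ {s}) S'

/-- The improvement property of a distributional preference. -/
def improvementProperty [DecidableEq α] (pref : Finset α → Finset α → Prop) (q : ℕ) : Prop :=
  ∀ S S' : Finset α, S.card = q → S'.card = q → ∀ s ∈ S \ S',
    (∀ S'' ∈ NW q (S ∪ S'), s ∉ S'' → strictPref pref S S'') →
    (∀ S'' ∈ NW q (S ∪ S'), s ∈ S'' → pref S S'') →
    ∃ s' ∈ S' \ S, strictPref pref (S'.erase s' ∪ {s}) S'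

/-- A choice rule is non-wasteful. -/
def nonWasteful (q : ℕ) (Ch : Finset α → Finset α) : Prop :=
  ∀ S : Finset α, (Ch S).card = min q S.card

/-- A choice rule promotes the distributional preference. -/
def promotesPref (pref : Finset α → Finset α → Prop) (Ch : Finset α → Finset α) : Prop :=
  ∀ S : Finset α, ∀ S' ⊆ S, S'.card = (Ch S).card → ¬ strictPref pref S' (Ch S)

/-- A choice rule guarantees no justified envy with respect to priority ranking `π`. -/
def noJustifiedEnvy [DecidableEq α] (pref : Finset α → Finset α → Prop)
    (π : α → α → Prop) (Ch : Finset α → Finset α) : Prop :=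
  ∀ S : Finset α, ∀ s ∈ Ch S, ∀ s' ∈ S \ Ch S,
    pref ((Ch S).erase s ∪ {s'}) (Ch S) → π s s'

/-- Path independence of a choice rule. -/
def pathIndependent [DecidableEq α] (Ch : Finset α → Finset α) : Prop :=
  ∀ S S' : Finset α, Ch (S ∪ S') = Ch (Ch S ∪ S')

/-- Consistency of a choice rule. -/
def consistentRule [DecidableEq α] (Ch : Finset α → Finset α) : Prop :=
  ∀ S : Finset α, ∀ s ∈ S, s ∉ Ch S → Ch (S.erase s) = Ch S

/-- Substitutability of a choice rule. -/
def substitutableRule [DecidableEq α] (Ch : Finset α → Finset α) : Prop :=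
  ∀ S : Finset α, ∀ s ∈ S, ∀ s' ∈ S, s ≠ s' → s ∈ Ch S → s ∈ Ch (S.erase s')

/-- `l` lists the elements of `A` in strictly decreasing `π`-priority. -/
def descList [DecidableEq α] (π : α → α → Prop) (A : Finset α) (l : List α) : Prop :=
  l.Pairwise π ∧ l.Nodup ∧ l.toFinset = A

/-- `A` priority dominates `B` with respect to `π`. -/
def priorityDominates [DecidableEq α] (π : α → α → Prop) (A B : Finset α) : Prop :=
  B.card ≤ A.card ∧
  ∀ la lb : List α, descList π A la → descList π B lb →
    ∀ (k : ℕ) (ha : k < la.length) (hb : k < lb.length),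
      la.get ⟨k, ha⟩ = lb.get ⟨k, hb⟩ ∨ π (la.get ⟨k, ha⟩) (lb.get ⟨k, hb⟩)

/-- The revealed preference axiom for a choice rule: no revealed-priority cycles. -/
def revealedPrefAxiom [DecidableEq α] (pref : Finset α → Finset α → Prop)
    (Ch : Finset α → Finset α) : Prop :=
  ¬ ∃ (K : ℕ) (s : ℕ → α) (T : ℕ → Finset α), 0 < K ∧ s K = s 0 ∧
    ∀ k < K, s k ∈ Ch (T k) ∧ s (k + 1) ∈ T k \ Ch (T k) ∧
      pref ((Ch (T k)).erase (s k) ∪ {s (k + 1)}) (Ch (T k))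

/-!
For `q ≤ #S`, the upper-bound property makes any two elements of the frontier comparable, hence
indifferent, and every set in `NW q S` lies weakly below the frontier by finiteness. The frontier
therefore consists of maximizers, so the maximizer property lets two distinct frontier sets swap a
pair of elements with both results again in the frontier. This weak exchange property implies basis
exchange: repeating such swaps moves `B'` closer to `B` until the prescribed `b ∈ B \ B'` is the
element given up. For `#S < q` the frontier is `{S}`.
-/

section Exchange

variable [DecidableEq α]

/-- The matroid basis-exchange axiom, which the frontier is to satisfy. It is the counterpart of
`Matroid.ExchangeProperty` for families of finsets, as frontiers consist of finsets. -/
def BasisExchange (F : Set (Finset α)) : Prop :=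
  ∀ B ∈ F, ∀ B' ∈ F, ∀ b ∈ B \ B', ∃ b' ∈ B' \ B, B.erase b ∪ {b'} ∈ F

/-- The weak exchange property (Murota's axiom (B-EXC_w)): two distinct members admit some
simultaneous swap, in contrast to `BasisExchange` with neither swapped element prescribed. It is
the form of exchange that the maximizer property yields directly. -/
def WeakExchange (F : Set (Finset α)) : Prop :=
  ∀ B ∈ F, ∀ B' ∈ F, B ≠ B' → ∃ s ∈ B \ B', ∃ s' ∈ B' \ B,
    B.erase s ∪ {s'} ∈ F ∧ B'.erase s' ∪ {s} ∈ F

theorem sdiff_erase_union_singleton {A B : Finset α} {s t : α} (ht : t ∉ A) :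
    A \ (B.erase t ∪ {s}) = (A \ B).erase s := by
  grind

theorem WeakExchange.basisExchange {F : Set (Finset α)} (hF : WeakExchange F) :
    BasisExchange F := by
  intro B hB B' hB' b hb
  induction hn : #(B \ B') using Nat.strong_induction_on generalizing B' with
  | _ n ih =>
    have hne : B ≠ B' := by
      rintro rfl
      exact notMem_empty b (by rwa [Finset.sdiff_self] at hb)
    obtain ⟨s, hs, s', hs', hBs, hB's⟩ := hF B hB B' hB' hne
    obtain rfl | hbs := eq_or_ne b s
    · exact ⟨s', hs', hBs⟩
    · have hsdiff : B \ (B'.erase s' ∪ {s}) = (B \ B').erase s :=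
        sdiff_erase_union_singleton (mem_sdiff.1 hs').2
      obtain ⟨b', hb', hmem⟩ := ih #((B \ B').erase s) (hn ▸ card_erase_lt_of_mem hs)
        (B'.erase s' ∪ {s}) hB's (hsdiff ▸ mem_erase.2 ⟨hbs, hb⟩) (congrArg card hsdiff)
      have hb'B' : b' ∈ B' \ B := by grind
      exact ⟨b', hb'B', hmem⟩

end Exchange

section NonWasteful

variable {q : ℕ} {S T A : Finset α}

theorem NW_finite (q : ℕ) (S : Finset α) : (NW q S).Finite :=
  S.powerset.finite_toSet.subset fun _ hA => mem_coe.2 (mem_powerset.2 hA.1)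

theorem NW_nonempty (q : ℕ) (S : Finset α) : (NW q S).Nonempty :=
  exists_subset_card_eq (min_le_right q #S)

theorem eq_of_mem_NW_of_card_le (hA : A ∈ NW q S) (hS : #S ≤ q) : A = S :=
  eq_of_subset_of_card_le hA.1 (hA.2.trans (min_eq_right hS)).ge

theorem card_eq_of_mem_NW_of_le_card (hA : A ∈ NW q S) (hS : q ≤ #S) : #A = q :=
  hA.2.trans (min_eq_left hS)

theorem NW_subset_NW (hA : A ∈ NW q S) (hAT : A ⊆ T) (hTS : T ⊆ S) : NW q T ⊆ NW q S := by
  intro C hC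
  have hmin : min q #T = min q #S := by
    have hAS := hA.2
    have hAT_card := card_le_card hAT
    have hTS_card := card_le_card hTS
    omega
  exact ⟨hC.1.trans hTS, hC.2.trans hmin⟩

theorem erase_union_singleton_mem_NW [DecidableEq α] {s t : α} (hA : A ∈ NW q S) (hs : s ∈ A)
    (ht : t ∈ S) (htA : t ∉ A) : A.erase s ∪ {t} ∈ NW q S := by
  refine ⟨union_subset ((erase_subset s A).trans hA.1) (singleton_subset_iff.2 ht), ?_⟩
  have hdisj : Disjoint (A.erase s) {t} :=
    disjoint_singleton_right.2 fun h => htA (mem_of_mem_erase h)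
  rw [card_union_of_disjoint hdisj, card_singleton, card_erase_add_one hs, hA.2]

end NonWasteful

section Frontier

variable {pref : Finset α → Finset α → Prop} {q : ℕ} {S A B C : Finset α}

instance isStrictOrder_strictPref [IsTrans (Finset α) pref] :
    IsStrictOrder (Finset α) (strictPref pref) where
  irrefl _ h := h.2 h.1
  trans _ _ _ hAB hBC :=
    ⟨trans_of pref hAB.1 hBC.1, fun hCA => hAB.2 (trans_of pref hBC.1 hCA)⟩

theorem exists_mem_frontierSet_strictPref [IsTrans (Finset α) pref] (hC : C ∈ NW q S)
    (hCF : C ∉ frontierSet pref q S) : ∃ A ∈ frontierSet pref q S, strictPref pref A C := by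
  let above : Set (Finset α) := {A ∈ NW q S | strictPref pref A C}
  have habove : above.Nonempty := by
    by_contra! hempty
    exact hCF ⟨hC, fun A hA hAC => hempty.subset ⟨hA, hAC⟩⟩
  have hwf : above.WellFoundedOn (strictPref pref) :=
    ((NW_finite q S).subset (Set.sep_subset _ _)).wellFoundedOn
  have := habove.to_subtype
  obtain ⟨⟨A, hA, hAC⟩, -, hbest⟩ := hwf.has_min Set.univ Set.univ_nonempty
  have hundominated : ∀ B ∈ NW q S, ¬ strictPref pref B A := fun B hB hBA =>
    hbest ⟨B, hB, trans_of (strictPref pref) hBA hAC⟩ trivial hBA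
  exact ⟨A, ⟨hA, hundominated⟩, hAC⟩

theorem frontierSet_nonempty [IsTrans (Finset α) pref] (q : ℕ) (S : Finset α) :
    (frontierSet pref q S).Nonempty := by
  obtain ⟨C, hC⟩ := NW_nonempty q S
  by_cases hCF : C ∈ frontierSet pref q S
  · exact ⟨C, hCF⟩
  · obtain ⟨A, hA, -⟩ := exists_mem_frontierSet_strictPref hC hCF
    exact ⟨A, hA⟩

theorem mem_frontierSet_of_pref [IsTrans (Finset α) pref] (hA : A ∈ frontierSet pref q S)
    (hB : B ∈ NW q S) (hBA : pref B A) : B ∈ frontierSet pref q S :=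
  ⟨hB, fun C hC hCB => hA.2 C hC
    ⟨trans_of pref hCB.1 hBA, fun hAC => hCB.2 (trans_of pref hBA hAC)⟩⟩

variable [DecidableEq α]

theorem NW_union_subset_NW (hA : A ∈ NW q S) (hB : B ∈ NW q S) : NW q (A ∪ B) ⊆ NW q S :=
  NW_subset_NW hA subset_union_left (union_subset hA.1 hB.1)

theorem upperBoundProperty.pref_of_mem_frontierSet (hub : upperBoundProperty pref q)
    (hS : q ≤ #S) (hA : A ∈ frontierSet pref q S) (hB : B ∈ frontierSet pref q S) :
    pref A B := by
  by_contra hAB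
  have hBA : ¬ pref B A := fun hBA => hA.2 B hB.1 ⟨hBA, hAB⟩
  obtain ⟨C, hC, hCA | hCB⟩ := hub A B (card_eq_of_mem_NW_of_le_card hA.1 hS)
    (card_eq_of_mem_NW_of_le_card hB.1 hS) ⟨hAB, hBA⟩
  · exact hA.2 C (NW_union_subset_NW hA.1 hB.1 hC) hCA
  · exact hB.2 C (NW_union_subset_NW hA.1 hB.1 hC) hCB

theorem upperBoundProperty.pref_of_mem_NW [IsTrans (Finset α) pref]
    (hub : upperBoundProperty pref q) (hS : q ≤ #S) (hA : A ∈ frontierSet pref q S)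
    (hC : C ∈ NW q S) : pref A C := by
  by_cases hCF : C ∈ frontierSet pref q S
  · exact hub.pref_of_mem_frontierSet hS hA hCF
  · obtain ⟨B, hB, hBC⟩ := exists_mem_frontierSet_strictPref hC hCF
    exact trans_of pref (hub.pref_of_mem_frontierSet hS hA hB) hBC.1

theorem erase_union_singleton_mem_frontierSet [IsTrans (Finset α) pref] {s t : α}
    (hA : A ∈ frontierSet pref q S) (hs : s ∈ A) (ht : t ∈ S) (htA : t ∉ A)
    (hpref : pref (A.erase s ∪ {t}) A) : A.erase s ∪ {t} ∈ frontierSet pref q S :=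
  mem_frontierSet_of_pref hA (erase_union_singleton_mem_NW hA.1 hs ht htA) hpref

theorem weakExchange_frontierSet [IsTrans (Finset α) pref] (hub : upperBoundProperty pref q)
    (hmax : maximizerProperty pref q) (S : Finset α) : WeakExchange (frontierSet pref q S) := by
  intro A hA B hB hne
  obtain hS | hS := le_total #S q
  · exact absurd ((eq_of_mem_NW_of_card_le hA.1 hS).trans
      (eq_of_mem_NW_of_card_le hB.1 hS).symm) hne
  have hbest : ∀ C ∈ NW q (A ∪ B), pref A C ∧ pref B C := fun C hC =>
    have hCS := NW_union_subset_NW hA.1 hB.1 hC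
    ⟨hub.pref_of_mem_NW hS hA hCS, hub.pref_of_mem_NW hS hB hCS⟩
  obtain ⟨s, hs, t, ht, hAst, hBts⟩ := hmax A B hne (card_eq_of_mem_NW_of_le_card hA.1 hS)
    (card_eq_of_mem_NW_of_le_card hB.1 hS) hbest
  obtain ⟨hsA, hsB⟩ := mem_sdiff.1 hs
  obtain ⟨htB, htA⟩ := mem_sdiff.1 ht
  exact ⟨s, hs, t, ht,
    erase_union_singleton_mem_frontierSet hA hsA (hB.1.1 htB) htA hAst.1,
    erase_union_singleton_mem_frontierSet hB htB (hA.1.1 hsA) hsB hBts.1⟩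

theorem stmt3_general [IsTrans (Finset α) pref] (hub : upperBoundProperty pref q)
    (hmax : maximizerProperty pref q) (S : Finset α) :
    (frontierSet pref q S).Nonempty ∧ BasisExchange (frontierSet pref q S) :=
  ⟨frontierSet_nonempty q S, (weakExchange_frontierSet hub hmax S).basisExchange⟩

end Frontier

/-- Under the upper-bound and maximizer properties, for every `S`
the frontier of `S` is nonempty and satisfies the matroid basis-exchange axiom,
hence it forms the collection of bases of a matroid with ground set `S`. -/
theorem stmt3 {α : Type*} [Fintype α] [Nonempty α] [DecidableEq α]
    (q : ℕ) (hq : 0 < q)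
    (pref : Finset α → Finset α → Prop)
    (hrefl : ∀ A : Finset α, pref A A)
    (htrans : ∀ A B C : Finset α, pref A B → pref B C → pref A C)
    (hub : upperBoundProperty pref q)
    (hmax : maximizerProperty pref q) :
    ∀ S : Finset α, (frontierSet pref q S).Nonempty ∧
      ∀ B ∈ frontierSet pref q S, ∀ B' ∈ frontierSet pref q S, ∀ b ∈ B \ B',
        ∃ b' ∈ B' \ B, (B.erase b ∪ {b'}) ∈ frontierSet pref q S := by
  have : IsTrans (Finset α) pref := ⟨htrans⟩
  exact stmt3_general hub hmax
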